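/- arXiv:1110.1554 — 3 statements merged into one kernel-verified Lean document; each statement's English description precedes it below -/
import Mathlib

section
/- Let θ = log 5 / log 2. Let α, η : ℕ → ℝ be sequences such that there is a constant c > 0 with 0 < α_j ≤ c (j!)^{−θ} for all j ≥ 0, and such that for every r > 1 there is a constant C_r > 0 with |η_j| ≤ C_r r^{−j} for all j ≥ 0. Define N_j = 2 Σ_{l=0}^{j} (α_{j−l} η_{j+l+1} − α_{j+l+1} η_{j−l}). Then for every s > 1 there exists a constant C > 0 such that |N_j| ≤ C s^{−j} for all j ≥ 0; in particular N_j → 0 as j → ∞. (This abstracts the decay estimate of Theorem 3.2: with α_j = P_{j1}(q_1) and η_j = ∂_n P_{j1}(q_1), one has ‖P_{j1}‖²_{L²} = N_j, so the norms ‖p_j‖ of the orthogonal polynomials tend to 0 at least exponentially fast.) -/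
open scoped BigOperators

/-!
Sequences decaying faster than every geometric sequence include the negative powers of `j!`, by
`x ^ j / j! ≤ exp x`. If `a` and `b` are two such sequences and `m + n ≥ j`, then
`a m * b n = O((2 * r) ^ (-j))`, and the spare factor `2 ^ (-j)` absorbs the number `j + 1` of terms
in the sums defining `N j`.
-/

/-- Decay faster than every geometric sequence. The geometric sequences are written as real powers
`r ^ (-j)`, and the bounds are required for every `j` rather than eventually. -/
def SuperexponentialDecay {E : Type*} [Norm E] (u : ℕ → E) : Prop :=
  ∀ r : ℝ, 1 < r → ∃ C : ℝ, 0 < C ∧ ∀ j : ℕ, ‖u j‖ ≤ C * r ^ (-(j : ℝ))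

theorem factorial_rpow_neg_le {θ r : ℝ} (hθ : 0 < θ) (hr : 0 < r) (j : ℕ) :
    (j.factorial : ℝ) ^ (-θ) ≤ Real.exp (r ^ θ⁻¹) ^ θ * r ^ (-(j : ℝ)) := by
  set x := r ^ θ⁻¹
  have hx : 0 < x := Real.rpow_pos_of_pos hr _
  have hxr : (x ^ j) ^ θ = r ^ (j : ℝ) := by
    rw [← Real.rpow_pow_comm hx.le, Real.rpow_inv_rpow hr.le hθ.ne', Real.rpow_natCast]
  calc (j.factorial : ℝ) ^ (-θ)
      = (x ^ j / j.factorial) ^ θ * r ^ (-(j : ℝ)) := by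
        rw [Real.div_rpow (by positivity) (by positivity), hxr, Real.rpow_neg (by positivity),
          Real.rpow_neg hr.le]
        field_simp
    _ ≤ Real.exp x ^ θ * r ^ (-(j : ℝ)) := by
        gcongr
        exact Real.pow_div_factorial_le_exp x hx.le j

theorem succ_mul_two_mul_rpow_neg_le {r : ℝ} (hr : 0 ≤ r) (j : ℕ) :
    ((j : ℝ) + 1) * (2 * r) ^ (-(j : ℝ)) ≤ r ^ (-(j : ℝ)) := by
  have hj : (j : ℝ) + 1 ≤ 2 ^ j := by exact_mod_cast Nat.lt_two_pow_self (n := j)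
  calc ((j : ℝ) + 1) * (2 * r) ^ (-(j : ℝ))
      ≤ 2 ^ j * (2 * r) ^ (-(j : ℝ)) := by gcongr
    _ = r ^ (-(j : ℝ)) := by
        rw [Real.mul_rpow two_pos.le hr, Real.rpow_neg two_pos.le, Real.rpow_natCast,
          mul_inv_cancel_left₀ (by positivity)]

namespace SuperexponentialDecay

theorem of_norm_le_factorial_rpow {E : Type*} [Norm E] {u : ℕ → E} {θ c : ℝ}
    (hθ : 0 < θ) (hc : 0 < c) (hu : ∀ j, ‖u j‖ ≤ c * (j.factorial : ℝ) ^ (-θ)) :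
    SuperexponentialDecay u := by
  intro r hr
  refine ⟨c * Real.exp (r ^ θ⁻¹) ^ θ, by positivity, fun j ↦ (hu j).trans ?_⟩
  rw [mul_assoc]
  gcongr
  exact factorial_rpow_neg_le hθ (one_pos.trans hr) j

section SeminormedAddGroup

variable {E : Type*} [SeminormedAddGroup E] {u v : ℕ → E}

theorem sub (hu : SuperexponentialDecay u) (hv : SuperexponentialDecay v) :
    SuperexponentialDecay fun j ↦ u j - v j := by
  intro r hr
  obtain ⟨A, hA, hu⟩ := hu r hr
  obtain ⟨B, hB, hv⟩ := hv r hr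
  refine ⟨A + B, by positivity, fun j ↦ ?_⟩
  rw [add_mul]
  exact norm_sub_le_of_le (hu j) (hv j)

theorem tendsto_zero (hu : SuperexponentialDecay u) : Filter.Tendsto u Filter.atTop (nhds 0) := by
  obtain ⟨C, -, hC⟩ := hu 2 one_lt_two
  have hgeom : Filter.Tendsto (fun j : ℕ ↦ (2 : ℝ) ^ (-(j : ℝ))) Filter.atTop (nhds 0) :=
    (tendsto_rpow_atBot_of_base_gt_one 2 one_lt_two).comp
      (Filter.tendsto_neg_atTop_atBot.comp tendsto_natCast_atTop_atTop)
  exact squeeze_zero_norm hC (by simpa only [mul_zero] using hgeom.const_mul C)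

end SeminormedAddGroup

section NonUnitalSeminormedRing

variable {R : Type*} [NonUnitalSeminormedRing R] {a b : ℕ → R}

theorem const_mul (c : R) (ha : SuperexponentialDecay a) :
    SuperexponentialDecay fun j ↦ c * a j := by
  intro r hr
  obtain ⟨A, hA, ha⟩ := ha r hr
  refine ⟨(‖c‖ + 1) * A, by positivity, fun j ↦ ?_⟩
  calc ‖c * a j‖ ≤ ‖c‖ * (A * r ^ (-(j : ℝ))) := norm_mul_le_of_le le_rfl (ha j)
    _ ≤ (‖c‖ + 1) * (A * r ^ (-(j : ℝ))) := by gcongr; exact le_add_of_nonneg_right one_pos.le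
    _ = (‖c‖ + 1) * A * r ^ (-(j : ℝ)) := (mul_assoc _ _ _).symm

theorem exists_norm_mul_le (ha : SuperexponentialDecay a) (hb : SuperexponentialDecay b)
    {r : ℝ} (hr : 1 < r) :
    ∃ C : ℝ, 0 < C ∧ ∀ j m n : ℕ, j ≤ m + n → ‖a m * b n‖ ≤ C * r ^ (-(j : ℝ)) := by
  obtain ⟨A, hA, ha⟩ := ha r hr
  obtain ⟨B, hB, hb⟩ := hb r hr
  refine ⟨A * B, by positivity, fun j m n hj ↦ ?_⟩
  have hj' : (j : ℝ) ≤ m + n := by exact_mod_cast hj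
  calc ‖a m * b n‖ ≤ (A * r ^ (-(m : ℝ))) * (B * r ^ (-(n : ℝ))) :=
        norm_mul_le_of_le (ha m) (hb n)
    _ = A * B * r ^ (-(m : ℝ) + -(n : ℝ)) := by
        rw [Real.rpow_add (one_pos.trans hr), mul_mul_mul_comm]
    _ ≤ A * B * r ^ (-(j : ℝ)) := by
        gcongr
        · exact hr.le
        · linarith

theorem sum_mul (ha : SuperexponentialDecay a) (hb : SuperexponentialDecay b) {σ τ : ℕ → ℕ → ℕ}
    (hστ : ∀ j, ∀ l ≤ j, j ≤ σ j l + τ j l) :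
    SuperexponentialDecay fun j ↦ ∑ l ∈ Finset.range (j + 1), a (σ j l) * b (τ j l) := by
  intro r hr
  obtain ⟨C, hC, hab⟩ := ha.exists_norm_mul_le hb (r := 2 * r) (by linarith)
  refine ⟨C, hC, fun j ↦ ?_⟩
  have hterm : ∀ l ∈ Finset.range (j + 1),
      ‖a (σ j l) * b (τ j l)‖ ≤ C * (2 * r) ^ (-(j : ℝ)) := fun l hl ↦
    hab j _ _ (hστ j l (Finset.mem_range_succ_iff.mp hl))
  calc ‖∑ l ∈ Finset.range (j + 1), a (σ j l) * b (τ j l)‖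
      ≤ ∑ _l ∈ Finset.range (j + 1), C * (2 * r) ^ (-(j : ℝ)) := norm_sum_le_of_le _ hterm
    _ = C * ((j + 1) * (2 * r) ^ (-(j : ℝ))) := by
        rw [Finset.sum_const, Finset.card_range, nsmul_eq_mul, Nat.cast_succ, mul_left_comm]
    _ ≤ C * r ^ (-(j : ℝ)) := by
        gcongr
        exact succ_mul_two_mul_rpow_neg_le (one_pos.trans hr).le j

end NonUnitalSeminormedRing

end SuperexponentialDecay

theorem abstract_decay_estimate_general {R : Type*} [SeminormedRing R] {a b N : ℕ → R}
    (ha : SuperexponentialDecay a) (hb : SuperexponentialDecay b)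
    (hN : ∀ j : ℕ, N j = 2 * ∑ l ∈ Finset.range (j + 1),
      (a (j - l) * b (j + l + 1) - a (j + l + 1) * b (j - l))) :
    SuperexponentialDecay N ∧ Filter.Tendsto N Filter.atTop (nhds 0) := by
  have hleft : SuperexponentialDecay fun j ↦
      ∑ l ∈ Finset.range (j + 1), a (j - l) * b (j + l + 1) :=
    ha.sum_mul hb fun _ _ _ ↦ by omega
  have hright : SuperexponentialDecay fun j ↦
      ∑ l ∈ Finset.range (j + 1), a (j + l + 1) * b (j - l) :=
    ha.sum_mul hb fun _ _ _ ↦ by omega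
  have hdecay : SuperexponentialDecay N := by
    rw [funext hN]
    simpa only [Finset.sum_sub_distrib] using (hleft.sub hright).const_mul 2
  exact ⟨hdecay, hdecay.tendsto_zero⟩

/-- Abstract decay estimate from Theorem 3.2. If `0 < α_j ≤ c (j!)^{-log 5/log 2}` and for every
`r > 1`, `|η_j| ≤ C_r r^{-j}`, and `N_j = 2 Σ_{l=0}^{j} (α_{j-l} η_{j+l+1} - α_{j+l+1} η_{j-l})`,
then for every `s > 1` there is `C > 0` with `|N_j| ≤ C s^{-j}`; in particular `N_j → 0`. -/
theorem abstract_decay_estimate (α η N : ℕ → ℝ)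
    (hα : ∃ c : ℝ, 0 < c ∧ ∀ j : ℕ,
      0 < α j ∧ α j ≤ c * (Nat.factorial j : ℝ) ^ (-(Real.log 5 / Real.log 2)))
    (hη : ∀ r : ℝ, 1 < r → ∃ C : ℝ, 0 < C ∧ ∀ j : ℕ, |η j| ≤ C * r ^ (-(j : ℝ)))
    (hN : ∀ j : ℕ, N j = 2 * ∑ l ∈ Finset.range (j + 1),
      (α (j - l) * η (j + l + 1) - α (j + l + 1) * η (j - l))) :
    (∀ s : ℝ, 1 < s → ∃ C : ℝ, 0 < C ∧ ∀ j : ℕ, |N j| ≤ C * s ^ (-(j : ℝ))) ∧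
      Filter.Tendsto N Filter.atTop (nhds 0) := by
  obtain ⟨c, hc, hα⟩ := hα
  have hθ : 0 < Real.log 5 / Real.log 2 := by positivity
  have hαdecay : SuperexponentialDecay α := .of_norm_le_factorial_rpow hθ hc fun j ↦
    (Real.norm_of_nonneg (hα j).1.le).trans_le (hα j).2
  exact abstract_decay_estimate_general hαdecay hη hN
end

section
/- Assume in addition that T is a bounded (continuous) linear operator with operator norm ‖T‖. Then for every k ≥ 1, 0 < c_k ≤ ‖T‖². (This is estimate (2.20) of Theorem 3.5.) -/
open scoped RealInnerProductSpace

/-!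
Since `p (k + 1)` is orthogonal to `p 0, …, p k` and differs from `T (p k)` by an element of their
span, it is the orthogonal projection of `T (p k)` onto the complement of that span. Projections do
not increase the norm, so `‖p (k + 1)‖ ≤ ‖T (p k)‖ ≤ ‖T‖ * ‖p k‖`.
-/

section Orthogonality

variable {𝕜 E : Type*} [RCLike 𝕜] [SeminormedAddCommGroup E] [InnerProductSpace 𝕜 E]
  {s : Set E} {v x : E}

theorem norm_le_norm_of_inner_sub_eq_zero (h : inner 𝕜 v (x - v) = 0) : ‖v‖ ≤ ‖x‖ := by
  have pythagoras : ‖x‖ * ‖x‖ = ‖v‖ * ‖v‖ + ‖x - v‖ * ‖x - v‖ := by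
    simpa only [add_sub_cancel] using
      norm_add_sq_eq_norm_sq_add_norm_sq_of_inner_eq_zero v (x - v) h
  rw [mul_self_le_mul_self_iff (norm_nonneg v) (norm_nonneg x), pythagoras]
  exact le_add_of_nonneg_right (mul_self_nonneg ‖x - v‖)

theorem inner_eq_zero_of_mem_span (hs : ∀ u ∈ s, inner 𝕜 v u = 0)
    (hx : x ∈ Submodule.span 𝕜 s) : inner 𝕜 v x = 0 := by
  have span_le_ker : Submodule.span 𝕜 s ≤ (innerₛₗ 𝕜 v).ker := Submodule.span_le.mpr hs
  exact span_le_ker hx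

theorem norm_le_norm_of_sub_mem_span (hs : ∀ u ∈ s, inner 𝕜 v u = 0)
    (hx : x - v ∈ Submodule.span 𝕜 s) : ‖v‖ ≤ ‖x‖ :=
  norm_le_norm_of_inner_sub_eq_zero (inner_eq_zero_of_mem_span hs hx)

end Orthogonality

theorem ck_bounds_general {𝕜 E : Type*} [RCLike 𝕜] [NormedAddCommGroup E] [InnerProductSpace 𝕜 E]
    (T : E →L[𝕜] E) (p : ℕ → E) (hne : ∀ k, p k ≠ 0)
    (horth : ∀ j k, j ≠ k → inner 𝕜 (p j) (p k) = 0)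
    (hspan : ∀ k, T (p k) - p (k + 1) ∈ Submodule.span 𝕜 (p '' Set.Iic k))
    (c : ℕ → ℝ) (hc : ∀ k, 1 ≤ k → c k = ‖p k‖ ^ 2 / ‖p (k - 1)‖ ^ 2) :
    ∀ k, 1 ≤ k → 0 < c k ∧ c k ≤ ‖T‖ ^ 2 := by
  intro k hk
  obtain ⟨k, rfl⟩ := Nat.exists_eq_add_of_le' hk
  have norm_sq_pos (j : ℕ) : 0 < ‖p j‖ ^ 2 := pow_pos (norm_pos_iff.mpr (hne j)) 2
  have orthogonal_succ : ∀ u ∈ p '' Set.Iic k, inner 𝕜 (p (k + 1)) u = 0 := by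
    rintro _ ⟨j, hj, rfl⟩
    exact horth (k + 1) j (Nat.lt_succ_of_le hj).ne'
  have norm_succ_le : ‖p (k + 1)‖ ≤ ‖T‖ * ‖p k‖ :=
    calc ‖p (k + 1)‖ ≤ ‖T (p k)‖ := norm_le_norm_of_sub_mem_span orthogonal_succ (hspan k)
      _ ≤ ‖T‖ * ‖p k‖ := T.le_opNorm (p k)
  rw [hc (k + 1) hk, Nat.add_sub_cancel]
  refine ⟨div_pos (norm_sq_pos (k + 1)) (norm_sq_pos k), ?_⟩
  rw [div_le_iff₀ (norm_sq_pos k), ← mul_pow]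
  exact pow_le_pow_left₀ (norm_nonneg _) norm_succ_le 2

/-- Estimate (2.20) of Theorem 3.5: if moreover `T` is bounded, then `0 < c_k ≤ ‖T‖²`
for every `k ≥ 1`. -/
theorem ck_bounds {H : Type*} [NormedAddCommGroup H] [InnerProductSpace ℝ H]
    (T : H →L[ℝ] H) (hsym : ∀ x y : H, ⟪T x, y⟫ = ⟪x, T y⟫)
    (p : ℕ → H) (hne : ∀ k, p k ≠ 0)
    (horth : ∀ j k, j ≠ k → ⟪p j, p k⟫ = 0)
    (hspan : ∀ k, T (p k) - p (k + 1) ∈ Submodule.span ℝ (p '' Set.Iic k))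
    (b c : ℕ → ℝ)
    (hb : ∀ k, b k = ⟪T (p k), p k⟫ / ‖p k‖ ^ 2)
    (hc : ∀ k, 1 ≤ k → c k = ‖p k‖ ^ 2 / ‖p (k - 1)‖ ^ 2) :
    ∀ k, 1 ≤ k → 0 < c k ∧ c k ≤ ‖T‖ ^ 2 :=
  ck_bounds_general T p hne horth hspan c hc
end

section
/- Let H be a real inner product space, let a > 0, and let v₀, v₁, v₂ ∈ H satisfy ⟨vᵢ, vᵢ⟩ = a for each i and ⟨vᵢ, vⱼ⟩ = −a/2 for all i ≠ j. Then v₀ + v₁ + v₂ = 0, and {v₀, v₁, v₂} is a tight frame for its span with frame bound (3/2)a: for every x in the linear span of {v₀, v₁, v₂} one has Σ_{i=0}^{2} ⟨x, vᵢ⟩² = (3a/2) ‖x‖², equivalently x = (2/(3a)) Σ_{i=0}^{2} ⟨x, vᵢ⟩ vᵢ. (This is Theorem 4.1 of the paper, with vᵢ the antisymmetric monomials P_{j3}^{(i)} and a = ‖P_{j3}^{(0)}‖²_{L²}.) -/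
open scoped RealInnerProductSpace BigOperators

/-!
Equal norms and equal mutual inner products make the Gram matrix `(a - b) I + b J`, with `J` the
all-ones matrix. If its rows sum to zero, then `∑ i, v i` is orthogonal to every `v j`, hence to
itself, and so vanishes. The `b J` part then contributes nothing to the frame operator
`S x = ∑ i, ⟪v i, x⟫ • v i`, which is therefore multiplication by `a - b` on the span of the
`v j`. The frame identity is `⟪x, S x⟫ = (a - b) ‖x‖ ^ 2`.
-/

section

open scoped InnerProductSpace

variable {𝕜 E ι : Type*} [RCLike 𝕜] [NormedAddCommGroup E] [InnerProductSpace 𝕜 E] {v : ι → E}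

section FrameOperator

variable [Fintype ι]

variable (𝕜) in
/-- The frame operator `x ↦ ∑ i, ⟪v i, x⟫ • v i` of a finite family `v`. The family is a tight
frame for a subspace with bound `A` when this operator is multiplication by `A` there. -/
noncomputable def frameOperator (v : ι → E) : E →L[𝕜] E :=
  ∑ i, InnerProductSpace.rankOne 𝕜 (v i) (v i)

theorem frameOperator_apply (v : ι → E) (x : E) :
    frameOperator 𝕜 v x = ∑ i, ⟪v i, x⟫_𝕜 • v i := by
  simp [frameOperator]

theorem inner_self_frameOperator (v : ι → E) (x : E) :
    ⟪x, frameOperator 𝕜 v x⟫_𝕜 = ((∑ i, ‖⟪v i, x⟫_𝕜‖ ^ 2 : ℝ) : 𝕜) := by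
  have h (i : ι) : ⟪v i, x⟫_𝕜 * ⟪x, v i⟫_𝕜 = (‖⟪v i, x⟫_𝕜‖ : 𝕜) ^ 2 := by
    rw [← inner_conj_symm x, RCLike.mul_conj]
  simp [frameOperator_apply, inner_sum, inner_smul_right, h]

theorem frameOperator_apply_eq_smul_of_mem_span {c : 𝕜}
    (hv : ∀ j, frameOperator 𝕜 v (v j) = c • v j) {x : E}
    (hx : x ∈ Submodule.span 𝕜 (Set.range v)) : frameOperator 𝕜 v x = c • x :=
  LinearMap.eqOn_span (f := (frameOperator 𝕜 v).toLinearMap) (g := c • LinearMap.id)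
    (Set.forall_mem_range.2 hv) hx

theorem sum_norm_inner_sq_of_frameOperator_apply_eq_smul {A : ℝ} {x : E}
    (hx : frameOperator 𝕜 v x = (A : 𝕜) • x) : ∑ i, ‖⟪v i, x⟫_𝕜‖ ^ 2 = A * ‖x‖ ^ 2 := by
  have h := inner_self_frameOperator (𝕜 := 𝕜) v x
  rw [hx, inner_smul_right, inner_self_eq_norm_sq_to_K] at h
  exact_mod_cast h.symm

end FrameOperator

theorem inner_eq_add_ite_of_constant_inner [DecidableEq ι] {a b : 𝕜}
    (hdiag : ∀ i, ⟪v i, v i⟫_𝕜 = a) (hoff : ∀ i j, i ≠ j → ⟪v i, v j⟫_𝕜 = b) (i j : ι) :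
    ⟪v i, v j⟫_𝕜 = b + if i = j then a - b else 0 := by
  split_ifs with h
  · rw [h, hdiag, add_sub_cancel]
  · rw [hoff i j h, add_zero]

variable [Fintype ι]

theorem sum_eq_zero_of_forall_sum_inner_eq_zero (h : ∀ i, ∑ j, ⟪v i, v j⟫_𝕜 = 0) :
    ∑ i, v i = 0 := by
  rw [← inner_self_eq_zero (𝕜 := 𝕜), sum_inner]
  simp only [inner_sum, h, Finset.sum_const_zero]

theorem sum_inner_of_constant_inner {a b : 𝕜} (hdiag : ∀ i, ⟪v i, v i⟫_𝕜 = a)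
    (hoff : ∀ i j, i ≠ j → ⟪v i, v j⟫_𝕜 = b) (i : ι) :
    ∑ j, ⟪v i, v j⟫_𝕜 = a + (Fintype.card ι - 1) * b := by
  classical
  simp only [inner_eq_add_ite_of_constant_inner hdiag hoff, Finset.sum_add_distrib,
    Finset.sum_const, Finset.card_univ, nsmul_eq_mul, Finset.sum_ite_eq, Finset.mem_univ, if_true]
  ring

theorem frameOperator_apply_self_of_constant_inner {a b : 𝕜} (hdiag : ∀ i, ⟪v i, v i⟫_𝕜 = a)
    (hoff : ∀ i j, i ≠ j → ⟪v i, v j⟫_𝕜 = b) (j : ι) :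
    frameOperator 𝕜 v (v j) = b • ∑ i, v i + (a - b) • v j := by
  classical
  simp only [frameOperator_apply, inner_eq_add_ite_of_constant_inner hdiag hoff, add_smul,
    ite_smul, zero_smul, Finset.sum_add_distrib, Finset.smul_sum, Finset.sum_ite_eq',
    Finset.mem_univ, if_true]

theorem tight_frame_of_three_general {a b : ℝ} (hab : a ≠ b)
    (hsum : a + (Fintype.card ι - 1) * b = 0) (hdiag : ∀ i, ⟪v i, v i⟫_𝕜 = (a : 𝕜))
    (hoff : ∀ i j, i ≠ j → ⟪v i, v j⟫_𝕜 = (b : 𝕜)) :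
    ∑ i, v i = 0 ∧
      ∀ x ∈ Submodule.span 𝕜 (Set.range v),
        ∑ i, ‖⟪v i, x⟫_𝕜‖ ^ 2 = (a - b) * ‖x‖ ^ 2 ∧
          x = ((a - b : ℝ) : 𝕜)⁻¹ • ∑ i, ⟪v i, x⟫_𝕜 • v i := by
  have sum_zero : ∑ i, v i = 0 := by
    refine sum_eq_zero_of_forall_sum_inner_eq_zero (𝕜 := 𝕜) fun i ↦ ?_
    rw [sum_inner_of_constant_inner hdiag hoff]
    exact_mod_cast congrArg (RCLike.ofReal : ℝ → 𝕜) hsum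
  have eigen (j : ι) : frameOperator 𝕜 v (v j) = ((a - b : ℝ) : 𝕜) • v j := by
    rw [frameOperator_apply_self_of_constant_inner hdiag hoff, sum_zero, smul_zero, zero_add,
      RCLike.ofReal_sub]
  refine ⟨sum_zero, fun x hx ↦ ?_⟩
  have hSx := frameOperator_apply_eq_smul_of_mem_span eigen hx
  refine ⟨sum_norm_inner_sq_of_frameOperator_apply_eq_smul hSx, ?_⟩
  rw [← frameOperator_apply, hSx, inv_smul_smul₀]
  exact RCLike.ofReal_ne_zero.2 (sub_ne_zero.2 hab)

end

/-- Theorem 4.1: three vectors with `⟨vᵢ, vᵢ⟩ = a` and `⟨vᵢ, vⱼ⟩ = -a/2` (`i ≠ j`) sum to zero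
and form a tight frame for their span with frame bound `(3/2)a`:
`Σᵢ ⟨x, vᵢ⟩² = (3a/2)‖x‖²`, equivalently `x = (2/(3a)) Σᵢ ⟨x, vᵢ⟩ vᵢ`. -/
theorem tight_frame_of_three {H : Type*} [NormedAddCommGroup H] [InnerProductSpace ℝ H]
    (a : ℝ) (ha : 0 < a) (v : Fin 3 → H)
    (hdiag : ∀ i, ⟪v i, v i⟫ = a)
    (hoff : ∀ i j, i ≠ j → ⟪v i, v j⟫ = -a / 2) :
    v 0 + v 1 + v 2 = 0 ∧
      ∀ x ∈ Submodule.span ℝ (Set.range v),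
        (∑ i : Fin 3, ⟪x, v i⟫ ^ 2 = (3 * a / 2) * ‖x‖ ^ 2) ∧
          x = (2 / (3 * a)) • ∑ i : Fin 3, ⟪x, v i⟫ • v i := by
  have h := tight_frame_of_three_general (b := -a / 2) (by linarith) (by norm_num; ring) hdiag hoff
  have bound : a - -a / 2 = 3 * a / 2 := by ring
  simpa [bound, Fin.sum_univ_three, real_inner_comm] using h
end
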